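/- arXiv:1910.13358 — 2 statements merged into one kernel-verified Lean document; each statement's English description precedes it below -/
import Mathlib

section
/- Let 𝒳 be a metric space with a fixed base point o, and write ‖x‖ := d(x,o). Let 0 < β ≤ 1. Then for any four points x₁, x₂, x₃, x₄ ∈ 𝒳 (indices interpreted modulo 4), |d(x₁,x₂)^β − d(x₂,x₃)^β + d(x₃,x₄)^β − d(x₄,x₁)^β| ≤ 2 · Σ_{i=1}^{4} min(‖x_i‖^β, ‖x_{i+1}‖^β). -/
/-!
In a quadrilateral `x₁ x₂ x₃ x₄` each vertex lies on two consecutive sides, so the distances to `o`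
cancel from the alternating sum of the side lengths, leaving `-2` times the alternating sum of the
Gromov products of the sides based at `o`. Each Gromov product lies between `0` and the smaller of
the two distances to `o`. The exponent `β` is absorbed into the metric, as `dist ^ β` is again a
pseudometric (the `β`-snowflake) for `0 < β ≤ 1`.
-/

section GromovProduct

variable {X : Type*} [PseudoMetricSpace X]

/-- The Gromov product `(x | y)_o` in a pseudometric space, with the base point as first argument;
it measures how far the triangle inequality through `o` is from being an equality. -/
noncomputable def gromovProduct (o x y : X) : ℝ :=
  (dist x o + dist y o - dist x y) / 2

lemma dist_eq_add_sub_gromovProduct (o x y : X) :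
    dist x y = dist x o + dist y o - 2 * gromovProduct o x y := by
  rw [gromovProduct]
  ring

lemma gromovProduct_nonneg (o x y : X) : 0 ≤ gromovProduct o x y :=
  div_nonneg (sub_nonneg.2 (dist_triangle_right x y o)) zero_le_two

lemma gromovProduct_comm (o x y : X) : gromovProduct o x y = gromovProduct o y x := by
  rw [gromovProduct, gromovProduct, add_comm, dist_comm x y]

lemma gromovProduct_le_dist_left (o x y : X) : gromovProduct o x y ≤ dist x o := by
  have triangle : dist y o ≤ dist x y + dist x o := dist_triangle_left y o x
  rw [gromovProduct]
  linarith

lemma gromovProduct_le_min (o x y : X) : gromovProduct o x y ≤ min (dist x o) (dist y o) :=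
  le_min (gromovProduct_le_dist_left o x y)
    (gromovProduct_comm o x y ▸ gromovProduct_le_dist_left o y x)

lemma alternating_sum_dist_eq (o x₁ x₂ x₃ x₄ : X) :
    dist x₁ x₂ - dist x₂ x₃ + dist x₃ x₄ - dist x₄ x₁ =
      2 * ((gromovProduct o x₂ x₃ + gromovProduct o x₄ x₁) -
        (gromovProduct o x₁ x₂ + gromovProduct o x₃ x₄)) := by
  simp only [dist_eq_add_sub_gromovProduct o x₁ x₂, dist_eq_add_sub_gromovProduct o x₂ x₃,
    dist_eq_add_sub_gromovProduct o x₃ x₄, dist_eq_add_sub_gromovProduct o x₄ x₁]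
  ring

lemma abs_alternating_sum_dist_le_sum_gromovProduct (o x₁ x₂ x₃ x₄ : X) :
    |dist x₁ x₂ - dist x₂ x₃ + dist x₃ x₄ - dist x₄ x₁| ≤
      2 * (gromovProduct o x₁ x₂ + gromovProduct o x₂ x₃
        + gromovProduct o x₃ x₄ + gromovProduct o x₄ x₁) := by
  have h₁₂ := gromovProduct_nonneg o x₁ x₂
  have h₂₃ := gromovProduct_nonneg o x₂ x₃
  have h₃₄ := gromovProduct_nonneg o x₃ x₄
  have h₄₁ := gromovProduct_nonneg o x₄ x₁
  rw [alternating_sum_dist_eq o, abs_le]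
  constructor <;> linarith

lemma abs_alternating_sum_dist_le_sum_min (o x₁ x₂ x₃ x₄ : X) :
    |dist x₁ x₂ - dist x₂ x₃ + dist x₃ x₄ - dist x₄ x₁| ≤
      2 * (min (dist x₁ o) (dist x₂ o) + min (dist x₂ o) (dist x₃ o)
        + min (dist x₃ o) (dist x₄ o) + min (dist x₄ o) (dist x₁ o)) := by
  refine (abs_alternating_sum_dist_le_sum_gromovProduct o x₁ x₂ x₃ x₄).trans ?_
  gcongr <;> exact gromovProduct_le_min o _ _

end GromovProduct

open Metric.Snowflaking in
theorem stmt0_general {X : Type*} [PseudoMetricSpace X] (o : X) {β : ℝ} (hβ0 : 0 < β) (hβ1 : β ≤ 1)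
    (x₁ x₂ x₃ x₄ : X) :
    |dist x₁ x₂ ^ β - dist x₂ x₃ ^ β + dist x₃ x₄ ^ β - dist x₄ x₁ ^ β| ≤
      2 * (min (dist x₁ o ^ β) (dist x₂ o ^ β) + min (dist x₂ o ^ β) (dist x₃ o ^ β)
        + min (dist x₃ o ^ β) (dist x₄ o ^ β) + min (dist x₄ o ^ β) (dist x₁ o ^ β)) := by
  let snowflake : X → Metric.Snowflaking X β hβ0 hβ1 := toSnowflaking
  simpa only [snowflake, dist_toSnowflaking_toSnowflaking] using
    abs_alternating_sum_dist_le_sum_min (snowflake o) (snowflake x₁) (snowflake x₂) (snowflake x₃)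
      (snowflake x₄)

/-- Let `𝒳` be a metric space with base point `o`, `‖x‖ := dist x o`,
and `0 < β ≤ 1`. Then for any four points `x₁, x₂, x₃, x₄`,
`|d(x₁,x₂)^β − d(x₂,x₃)^β + d(x₃,x₄)^β − d(x₄,x₁)^β|
  ≤ 2 ∑ᵢ min(‖xᵢ‖^β, ‖xᵢ₊₁‖^β)` (indices mod 4). -/
theorem stmt0 {𝒳 : Type*} [MetricSpace 𝒳] (o : 𝒳) (β : ℝ) (hβ0 : 0 < β) (hβ1 : β ≤ 1)
    (x₁ x₂ x₃ x₄ : 𝒳) :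
    |dist x₁ x₂ ^ β - dist x₂ x₃ ^ β + dist x₃ x₄ ^ β - dist x₄ x₁ ^ β| ≤
      2 * (min (dist x₁ o ^ β) (dist x₂ o ^ β) + min (dist x₂ o ^ β) (dist x₃ o ^ β)
        + min (dist x₃ o ^ β) (dist x₄ o ^ β) + min (dist x₄ o ^ β) (dist x₁ o ^ β)) :=
  stmt0_general o hβ0 hβ1 x₁ x₂ x₃ x₄
end

section
/- Let β > 0 and β* := max(β, 2β−2). Let (X,Y) and (X⁽ⁿ⁾,Y⁽ⁿ⁾), n ≥ 1, be pairs of random variables in 𝒳×𝒴 such that (X⁽ⁿ⁾,Y⁽ⁿ⁾) converges in distribution to (X,Y) as n → ∞. Assume further that either (i) the families (‖X⁽ⁿ⁾‖^{β*})_n and (‖Y⁽ⁿ⁾‖^{β*})_n are uniformly integrable, or (ii) E‖X⁽ⁿ⁾‖^{β*} → E‖X‖^{β*} < ∞ and E‖Y⁽ⁿ⁾‖^{β*} → E‖Y‖^{β*} < ∞. Then hDC_β(X⁽ⁿ⁾,Y⁽ⁿ⁾) → hDC_β(X,Y) as n → ∞. -/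
/-!
The difference `d(x₁,x₂)^β - d(x₂,x₃)^β` is controlled by `d(x₁,x₃)^min(1,β)` times a power
`β - min(1,β)` of the diameter. In the alternating sum `ĥ` the pairs `x₁, x₃` and `x₂, x₄` are
exchanged by a rotation, so the large factor may always be charged to the farther pair; this gives
`ĥ² ≤ K ∏ᵢ (1 + ‖xᵢ‖^s)` for every `s ≥ max(β, 2β-2)`. Hence `|ĥ_X ĥ_Y|` is dominated by
`K ∏ᵢ (1 + ‖Xᵢ‖^s + ‖Yᵢ‖^s)`, whose mean is a fourth power and therefore converges together with
the moments. As fourfold product laws converge weakly along with their factors, Fatou's lemma for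
weak convergence, applied to the dominating function plus and minus `ĥ_X ĥ_Y`, gives the limit.
Uniform integrability reduces to convergence of moments by truncation.
-/

open MeasureTheory ProbabilityTheory Filter

noncomputable section

/-- The β-distance covariance `hDC_β` of a distribution `ν` on `𝒳 × 𝒴`:
`hDC_β := (1/4)·E[ĥ_X ĥ_Y]`, where the expectation is taken with respect to four
independent copies of a pair with distribution `ν` (realized on the product space). -/
def hDCMeasure (β : ℝ) {𝒳 𝒴 : Type*} [MetricSpace 𝒳] [MetricSpace 𝒴]
    [MeasurableSpace 𝒳] [MeasurableSpace 𝒴] (ν : Measure (𝒳 × 𝒴)) : ℝ :=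
  (1 / 4) * ∫ z : Fin 4 → 𝒳 × 𝒴,
    (dist (z 0).1 (z 1).1 ^ β - dist (z 1).1 (z 2).1 ^ β
      + dist (z 2).1 (z 3).1 ^ β - dist (z 3).1 (z 0).1 ^ β) *
    (dist (z 0).2 (z 1).2 ^ β - dist (z 1).2 (z 2).2 ^ β
      + dist (z 2).2 (z 3).2 ^ β - dist (z 3).2 (z 0).2 ^ β)
    ∂(Measure.pi fun _ => ν)

open scoped ENNReal NNReal Topology BoundedContinuousFunction

lemma one_add_max_rpow_le {a b : ℝ} (ha : 0 ≤ a) (hb : 0 ≤ b) (s : ℝ) :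
    1 + max a b ^ s ≤ (1 + a ^ s) * (1 + b ^ s) := by
  have has := Real.rpow_nonneg ha s
  have hbs := Real.rpow_nonneg hb s
  rcases max_choice a b with h | h <;> rw [h] <;> nlinarith

lemma rpow_le_one_add_rpow {x s t : ℝ} (hx : 0 ≤ x) (ht : 0 ≤ t) (hts : t ≤ s) :
    x ^ t ≤ 1 + x ^ s := by
  rcases le_total x 1 with h | h
  · linarith [Real.rpow_le_one hx h ht, Real.rpow_nonneg hx s]
  · linarith [Real.rpow_le_rpow_of_exponent_le h hts]

lemma rpow_mul_rpow_le_of_add_le_two_mul {m M s u v : ℝ} (hm : 0 ≤ m) (hmM : m ≤ M) (hu : 0 ≤ u)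
    (hv : 0 ≤ v) (hus : u ≤ s) (huv : u + v ≤ 2 * s) :
    M ^ u * m ^ v ≤ (1 + M ^ s) * (1 + m ^ s) := by
  have hM : 0 ≤ M := hm.trans hmM
  have hs : 0 ≤ s := hu.trans hus
  -- The part of the exponent `v` in excess of `s` is moved from `m` to `M`.
  set w := min v s
  have hw : 0 ≤ w := le_min hv hs
  have hwv : 0 ≤ v - w := sub_nonneg.2 (min_le_left v s)
  have huw : u + (v - w) ≤ s := by
    rcases min_choice v s with h | h <;> simp only [w, h] <;> linarith
  calc M ^ u * m ^ v = M ^ u * (m ^ (v - w) * m ^ w) := by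
        rw [← Real.rpow_add_of_nonneg hm hwv hw, sub_add_cancel]
    _ ≤ M ^ u * (M ^ (v - w) * m ^ w) := by gcongr
    _ = M ^ (u + (v - w)) * m ^ w := by rw [Real.rpow_add_of_nonneg hM hu hwv, mul_assoc]
    _ ≤ (1 + M ^ s) * (1 + m ^ s) := by
        gcongr
        · exact rpow_le_one_add_rpow hM (add_nonneg hu hwv) huw
        · exact rpow_le_one_add_rpow hm hw (min_le_right v s)

lemma abs_rpow_sub_rpow_le_rpow_abs_sub {β p q : ℝ} (hβ : 0 ≤ β) (hβ1 : β ≤ 1) (hp : 0 ≤ p)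
    (hq : 0 ≤ q) : |p ^ β - q ^ β| ≤ |p - q| ^ β := by
  have key {x y : ℝ} (hx : 0 ≤ x) (hy : 0 ≤ y) : x ^ β ≤ y ^ β + |x - y| ^ β :=
    calc x ^ β ≤ (y + |x - y|) ^ β :=
          Real.rpow_le_rpow hx (by linarith [le_abs_self (x - y)]) hβ
      _ ≤ y ^ β + |x - y| ^ β := Real.rpow_add_le_add_rpow hy (abs_nonneg _) hβ hβ1
  have hqp := key hq hp
  rw [abs_sub_comm q p] at hqp
  exact abs_sub_le_iff.2 ⟨by linarith [key hp hq], by linarith⟩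

lemma abs_rpow_sub_rpow_le_mul_abs_sub {β N p q : ℝ} (hβ : 1 ≤ β) (hp : p ∈ Set.Icc 0 N)
    (hq : q ∈ Set.Icc 0 N) : |p ^ β - q ^ β| ≤ β * N ^ (β - 1) * |p - q| := by
  refine (convex_Icc 0 N).norm_image_sub_le_of_norm_hasDerivWithin_le
    (fun x _ ↦ (Real.hasDerivAt_rpow_const (.inr hβ)).hasDerivWithinAt) (fun x hx ↦ ?_) hq hp
  rw [Real.norm_of_nonneg (mul_nonneg (by linarith) (Real.rpow_nonneg hx.1 _))]
  gcongr
  exacts [hx.1, hx.2]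

lemma abs_rpow_sub_rpow_le {β N p q : ℝ} (hβ : 0 ≤ β) (hp : p ∈ Set.Icc 0 N)
    (hq : q ∈ Set.Icc 0 N) :
    |p ^ β - q ^ β| ≤ max 1 β * (N ^ (β - min 1 β) * |p - q| ^ min 1 β) := by
  rcases le_total β 1 with h | h
  · simpa [h] using abs_rpow_sub_rpow_le_rpow_abs_sub hβ h hp.1 hq.1
  · simpa [h, mul_assoc] using abs_rpow_sub_rpow_le_mul_abs_sub h hp hq

/-- The alternating sum of `β`-powers of distances along a closed chain of four points: the paper's
`ĥ` as a function of the points. -/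
def altDist {S : Type*} [PseudoMetricSpace S] (β : ℝ) (x : Fin 4 → S) : ℝ :=
  dist (x 0) (x 1) ^ β - dist (x 1) (x 2) ^ β + dist (x 2) (x 3) ^ β - dist (x 3) (x 0) ^ β

section
variable {S : Type*} [PseudoMetricSpace S] {β : ℝ} {x : Fin 4 → S}

lemma altDist_rotate (β : ℝ) (x : Fin 4 → S) : altDist β (fun i ↦ x (i + 1)) = -altDist β x := by
  simp only [altDist, Fin.reduceAdd, zero_add]
  ring

lemma continuous_altDist (hβ : 0 ≤ β) : Continuous (altDist β : (Fin 4 → S) → ℝ) := by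
  have hdist (i j : Fin 4) : Continuous fun x : Fin 4 → S ↦ dist (x i) (x j) ^ β :=
    ((continuous_apply i).dist (continuous_apply j)).rpow_const fun _ ↦ .inr hβ
  exact (((hdist 0 1).sub (hdist 1 2)).add (hdist 2 3)).sub (hdist 3 0)

lemma abs_altDist_le {N : ℝ} (hβ : 0 ≤ β) (hN : ∀ i j, dist (x i) (x j) ≤ N) :
    |altDist β x| ≤ 2 * (max 1 β * (N ^ (β - min 1 β) * dist (x 0) (x 2) ^ min 1 β)) := by
  have hN0 : 0 ≤ N := dist_nonneg.trans (hN 0 0)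
  have key (i j k : Fin 4) : |dist (x i) (x j) ^ β - dist (x j) (x k) ^ β| ≤
      max 1 β * (N ^ (β - min 1 β) * dist (x i) (x k) ^ min 1 β) := by
    refine (abs_rpow_sub_rpow_le hβ ⟨dist_nonneg, hN i j⟩ ⟨dist_nonneg, hN j k⟩).trans ?_
    gcongr
    rw [dist_comm (x j)]
    exact abs_dist_sub_le _ _ _
  calc |altDist β x| = |(dist (x 0) (x 1) ^ β - dist (x 1) (x 2) ^ β) +
          (dist (x 2) (x 3) ^ β - dist (x 3) (x 0) ^ β)| := by rw [altDist, add_sub_assoc]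
    _ ≤ _ := abs_add_le _ _
    _ ≤ _ := add_le_add (key 0 1 2) (key 2 3 0)
    _ = _ := by rw [dist_comm (x 2), two_mul]

lemma abs_altDist_le_of_dist_le {o : S} {m M : ℝ} (hβ : 0 ≤ β) (hmM : m ≤ M)
    (h0 : dist (x 0) o ≤ m) (h1 : dist (x 1) o ≤ M) (h2 : dist (x 2) o ≤ m)
    (h3 : dist (x 3) o ≤ M) :
    |altDist β x| ≤ 2 ^ (β + 1) * max 1 β * (M ^ (β - min 1 β) * m ^ min 1 β) := by
  have hm : 0 ≤ m := dist_nonneg.trans h0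
  have hM : 0 ≤ M := hm.trans hmM
  have hxM (i : Fin 4) : dist (x i) o ≤ M := by
    fin_cases i
    exacts [h0.trans hmM, h1, h2.trans hmM, h3]
  have hdist (i j : Fin 4) : dist (x i) (x j) ≤ 2 * M := by
    linarith [dist_triangle_right (x i) (x j) o, hxM i, hxM j]
  have hdist02 : dist (x 0) (x 2) ≤ 2 * m := by linarith [dist_triangle_right (x 0) (x 2) o]
  have htwo : (2 : ℝ) ^ (β + 1) = 2 * (2 ^ (β - min 1 β) * 2 ^ min 1 β) := by
    rw [← Real.rpow_add two_pos, sub_add_cancel, Real.rpow_add_one two_ne_zero, mul_comm]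
  calc |altDist β x|
      ≤ 2 * (max 1 β * ((2 * M) ^ (β - min 1 β) * dist (x 0) (x 2) ^ min 1 β)) :=
        abs_altDist_le hβ hdist
    _ ≤ 2 * (max 1 β * ((2 * M) ^ (β - min 1 β) * (2 * m) ^ min 1 β)) := by gcongr
    _ = 2 ^ (β + 1) * max 1 β * (M ^ (β - min 1 β) * m ^ min 1 β) := by
        rw [Real.mul_rpow two_pos.le hM, Real.mul_rpow two_pos.le hm, htwo]
        ring

variable {s : ℝ}

lemma altDist_sq_le_of_max_le_max (hβ : 0 ≤ β) (hs : max β (2 * β - 2) ≤ s) (o : S)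
    (h : max (dist (x 0) o) (dist (x 2) o) ≤ max (dist (x 1) o) (dist (x 3) o)) :
    altDist β x ^ 2 ≤ (2 ^ (β + 1) * max 1 β) ^ 2 * ∏ i, (1 + dist (x i) o ^ s) := by
  set m := max (dist (x 0) o) (dist (x 2) o)
  set M := max (dist (x 1) o) (dist (x 3) o)
  have hm : 0 ≤ m := dist_nonneg.trans (le_max_left _ _)
  have hM : 0 ≤ M := hm.trans h
  have hβs : β ≤ s := (le_max_left _ _).trans hs
  have hexp0 : 0 ≤ β - min 1 β := sub_nonneg.2 (min_le_right 1 β)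
  have hexp : (β - min 1 β) * 2 ≤ s := by
    rcases min_choice 1 β with h | h <;> rw [h] <;> linarith [(le_max_right _ _).trans hs]
  have hsq : (M ^ (β - min 1 β) * m ^ min 1 β) ^ 2 ≤ (1 + M ^ s) * (1 + m ^ s) := by
    rw [mul_pow, ← Real.rpow_mul_natCast hM, ← Real.rpow_mul_natCast hm, Nat.cast_ofNat]
    exact rpow_mul_rpow_le_of_add_le_two_mul hm h (by positivity) (by positivity) hexp (by linarith)
  have habs := abs_altDist_le_of_dist_le hβ h (le_max_left _ _) (le_max_left _ _)
    (le_max_right _ _) (le_max_right _ _)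
  calc altDist β x ^ 2
      ≤ (2 ^ (β + 1) * max 1 β * (M ^ (β - min 1 β) * m ^ min 1 β)) ^ 2 :=
        sq_le_sq' (neg_le_of_abs_le habs) (le_of_abs_le habs)
    _ = (2 ^ (β + 1) * max 1 β) ^ 2 * (M ^ (β - min 1 β) * m ^ min 1 β) ^ 2 := mul_pow _ _ _
    _ ≤ (2 ^ (β + 1) * max 1 β) ^ 2 * ((1 + M ^ s) * (1 + m ^ s)) := by gcongr
    _ ≤ (2 ^ (β + 1) * max 1 β) ^ 2 * ((1 + dist (x 1) o ^ s) * (1 + dist (x 3) o ^ s) *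
          ((1 + dist (x 0) o ^ s) * (1 + dist (x 2) o ^ s))) := by
        gcongr <;> exact one_add_max_rpow_le dist_nonneg dist_nonneg s
    _ = (2 ^ (β + 1) * max 1 β) ^ 2 * ∏ i, (1 + dist (x i) o ^ s) := by
        rw [Fin.prod_univ_four]
        ring

lemma altDist_sq_le (hβ : 0 ≤ β) (hs : max β (2 * β - 2) ≤ s) (o : S) (x : Fin 4 → S) :
    altDist β x ^ 2 ≤ (2 ^ (β + 1) * max 1 β) ^ 2 * ∏ i, (1 + dist (x i) o ^ s) := by
  rcases le_total (max (dist (x 0) o) (dist (x 2) o)) (max (dist (x 1) o) (dist (x 3) o)) with h | h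
  · exact altDist_sq_le_of_max_le_max hβ hs o h
  · have hrot := altDist_sq_le_of_max_le_max (x := fun i ↦ x (i + 1)) hβ hs o
      (by simpa [max_comm] using h)
    have hprod : ∏ i, (1 + dist (x (i + 1)) o ^ s) = ∏ i, (1 + dist (x i) o ^ s) :=
      Equiv.prod_comp (Equiv.addRight (1 : Fin 4)) fun i ↦ 1 + dist (x i) o ^ s
    rwa [altDist_rotate, neg_sq, hprod] at hrot

lemma abs_altDist_mul_altDist_le {T : Type*} [PseudoMetricSpace T] (hβ : 0 ≤ β)
    (hs : max β (2 * β - 2) ≤ s) (oS : S) (oT : T) (z : Fin 4 → S × T) :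
    |altDist β (fun i ↦ (z i).1) * altDist β (fun i ↦ (z i).2)| ≤
      (2 ^ (β + 1) * max 1 β) ^ 2 * ∏ i, (1 + dist (z i).1 oS ^ s + dist (z i).2 oT ^ s) := by
  set w := ∏ i, (1 + dist (z i).1 oS ^ s + dist (z i).2 oT ^ s)
  have hS : ∏ i, (1 + dist (z i).1 oS ^ s) ≤ w :=
    Finset.prod_le_prod (fun _ _ ↦ by positivity) fun _ _ ↦
      le_add_of_nonneg_right (by positivity)
  have hT : ∏ i, (1 + dist (z i).2 oT ^ s) ≤ w :=
    Finset.prod_le_prod (fun _ _ ↦ by positivity) fun _ _ ↦ by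
      rw [add_right_comm]
      exact le_add_of_nonneg_right (by positivity)
  have hsqS := (altDist_sq_le hβ hs oS fun i ↦ (z i).1).trans
    (mul_le_mul_of_nonneg_left hS (sq_nonneg _))
  have hsqT := (altDist_sq_le hβ hs oT fun i ↦ (z i).2).trans
    (mul_le_mul_of_nonneg_left hT (sq_nonneg _))
  rw [abs_mul]
  have hamgm := two_mul_le_add_sq |altDist β fun i ↦ (z i).1| |altDist β fun i ↦ (z i).2|
  rw [sq_abs, sq_abs] at hamgm
  linarith

end

lemma tendsto_of_tendsto_add_of_le_liminf {ι : Type*} {l : Filter ι} {u v : ι → ℝ≥0∞}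
    {a b : ℝ≥0∞} (hab : a + b ≠ ∞) (hu : a ≤ l.liminf u) (hv : b ≤ l.liminf v)
    (huv : Tendsto (fun i ↦ u i + v i) l (𝓝 (a + b))) : Tendsto u l (𝓝 a) := by
  have hb : b ≠ ∞ := (ENNReal.add_ne_top.1 hab).2
  have hmin : Tendsto (fun i ↦ min (v i) b) l (𝓝 b) := tendsto_order.2
    ⟨fun c hc ↦ (eventually_lt_of_lt_liminf (hc.trans_le hv)).mono fun _ h ↦ lt_min h hc,
      fun c hc ↦ .of_forall fun i ↦ (min_le_right (v i) b).trans_lt hc⟩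
  have hsub : Tendsto (fun i ↦ u i + v i - min (v i) b) l (𝓝 a) := by
    simpa only [ENNReal.add_sub_cancel_right hb] using ENNReal.Tendsto.sub huv hmin (.inl hab)
  have hle (i : ι) : u i ≤ u i + v i - min (v i) b :=
    ENNReal.le_sub_of_add_le_right (ne_top_of_le_ne_top hb (min_le_right _ _))
      (add_le_add_right (min_le_left _ _) _)
  exact tendsto_order.2 ⟨fun c hc ↦ eventually_lt_of_lt_liminf (hc.trans_le hu),
    fun c hc ↦ (hsub.eventually_lt_const hc).mono fun i ↦ (hle i).trans_lt⟩

lemma ofReal_add_add_ofReal_sub {a b : ℝ} (h : |b| ≤ a) :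
    ENNReal.ofReal (a + b) + ENNReal.ofReal (a - b) = 2 * ENNReal.ofReal a := by
  obtain ⟨h₁, h₂⟩ := abs_le.1 h
  rw [← ENNReal.ofReal_add (by linarith) (by linarith), ← ENNReal.ofReal_ofNat 2,
    ← ENNReal.ofReal_mul zero_le_two]
  ring_nf

lemma lintegral_ofReal_add_add_lintegral_ofReal_sub {E : Type*} [MeasurableSpace E]
    {F H : E → ℝ} (hF : Measurable F) (hH : Measurable H) (hFH : ∀ x, |F x| ≤ H x)
    (ρ : Measure E) :
    ∫⁻ x, ENNReal.ofReal (H x + F x) ∂ρ + ∫⁻ x, ENNReal.ofReal (H x - F x) ∂ρ =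
      2 * ∫⁻ x, ENNReal.ofReal (H x) ∂ρ := by
  rw [← lintegral_add_left (by fun_prop : Measurable fun x ↦ ENNReal.ofReal (H x + F x)),
    ← lintegral_const_mul _ hH.ennreal_ofReal]
  exact lintegral_congr fun x ↦ ofReal_add_add_ofReal_sub (hFH x)

lemma integral_eq_toReal_sub_toReal {E : Type*} [MeasurableSpace E] {F H : E → ℝ}
    (hF : Measurable F) (hH : Measurable H) (hFH : ∀ x, |F x| ≤ H x) {ρ : Measure E}
    (hfin : ∫⁻ x, ENNReal.ofReal (H x) ∂ρ < ∞) :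
    ∫ x, F x ∂ρ = (∫⁻ x, ENNReal.ofReal (H x + F x) ∂ρ).toReal -
      (∫⁻ x, ENNReal.ofReal (H x) ∂ρ).toReal := by
  have hH0 (x : E) : 0 ≤ H x := (abs_nonneg _).trans (hFH x)
  have hHF0 (x : E) : 0 ≤ H x + F x := by linarith [neg_le_of_abs_le (hFH x)]
  have hHint : Integrable H ρ := (lintegral_ofReal_ne_top_iff_integrable
    hH.aestronglyMeasurable (.of_forall hH0)).1 hfin.ne
  have hFint : Integrable F ρ := hHint.mono' hF.aestronglyMeasurable (.of_forall hFH)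
  rw [← integral_eq_lintegral_of_nonneg_ae (.of_forall hH0) hH.aestronglyMeasurable,
    ← integral_eq_lintegral_of_nonneg_ae (.of_forall hHF0) (hH.add hF).aestronglyMeasurable,
    integral_add hHint hFint, add_sub_cancel_left]

lemma exists_lintegral_le_lintegral_min_add {ι Ω : Type*} [MeasurableSpace Ω] {μ : Measure Ω}
    {f : ι → Ω → ℝ} (hf : UniformIntegrable f 1 μ) {ε : ℝ} (hε : 0 < ε) :
    ∃ C : ℝ≥0, ∀ i, ∫⁻ ω, ENNReal.ofReal (f i ω) ∂μ ≤
      ∫⁻ ω, min (ENNReal.ofReal (f i ω)) C ∂μ + ENNReal.ofReal ε := by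
  obtain ⟨C, hC⟩ := hf.spec one_ne_zero ENNReal.one_ne_top hε
  refine ⟨C, fun i ↦ le_trans ?_ (add_le_add_right (hC i) _)⟩
  have hmin : AEMeasurable (fun ω ↦ min (ENNReal.ofReal (f i ω)) C) μ :=
    (hf.1 i).aemeasurable.ennreal_ofReal.min aemeasurable_const
  rw [eLpNorm_one_eq_lintegral_enorm, ← lintegral_add_left' hmin]
  refine lintegral_mono fun ω ↦ ?_
  by_cases hω : ω ∈ {ω | C ≤ ‖f i ω‖₊}
  · rw [Set.indicator_of_mem hω]
    exact le_add_left (Real.ofReal_le_enorm _)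
  · refine le_add_right (le_min le_rfl ?_)
    exact (Real.ofReal_le_enorm _).trans (ENNReal.coe_le_coe.2 (not_le.1 hω).le)

lemma lintegral_map_ofReal_one_add_add {Ω E : Type*} [MeasurableSpace Ω] [MeasurableSpace E]
    {μ : Measure Ω} [IsProbabilityMeasure μ] {W : Ω → E} (hW : AEMeasurable W μ) {f g : E → ℝ}
    (hf : Measurable f) (hg : Measurable g) (hf0 : 0 ≤ f) (hg0 : 0 ≤ g) :
    ∫⁻ z, ENNReal.ofReal (1 + f z + g z) ∂μ.map W =
      1 + ∫⁻ ω, ENNReal.ofReal (f (W ω)) ∂μ + ∫⁻ ω, ENNReal.ofReal (g (W ω)) ∂μ := by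
  have hsplit (z : E) : ENNReal.ofReal (1 + f z + g z) =
      1 + ENNReal.ofReal (f z) + ENNReal.ofReal (g z) := by
    rw [ENNReal.ofReal_add (add_nonneg zero_le_one (hf0 z)) (hg0 z),
      ENNReal.ofReal_add zero_le_one (hf0 z), ENNReal.ofReal_one]
  rw [lintegral_map' (by fun_prop) hW]
  simp only [hsplit]
  rw [lintegral_add_right' _ (by fun_prop), lintegral_add_right' _ (by fun_prop),
    lintegral_one, measure_univ]

lemma lintegral_prod_eval_pi {ι E : Type*} [Fintype ι] [MeasurableSpace E] (ν : Measure E)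
    [IsProbabilityMeasure ν] {f : E → ℝ≥0∞} (hf : Measurable f) :
    ∫⁻ z : ι → E, ∏ i, f (z i) ∂Measure.pi (fun _ ↦ ν) = (∫⁻ x, f x ∂ν) ^ Fintype.card ι := by
  rw [lintegral_prod_eq_prod_lintegral_of_indepFun _ _
    (iIndepFun_pi (X := fun _ ↦ f) fun _ ↦ hf.aemeasurable)
    fun i ↦ hf.comp (measurable_pi_apply i)]
  simp only [(measurePreserving_eval (fun _ : ι ↦ ν) _).lintegral_comp hf, Finset.prod_const,
    Finset.card_univ]

lemma lintegral_ofReal_const_mul_prod_eval_pi {ι E : Type*} [Fintype ι] [MeasurableSpace E]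
    (ν : Measure E) [IsProbabilityMeasure ν] {K : ℝ} (hK : 0 ≤ K) {w : E → ℝ} (hw : Measurable w)
    (hw0 : 0 ≤ w) :
    ∫⁻ z : ι → E, ENNReal.ofReal (K * ∏ i, w (z i)) ∂Measure.pi (fun _ ↦ ν) =
      ENNReal.ofReal K * (∫⁻ x, ENNReal.ofReal (w x) ∂ν) ^ Fintype.card ι := by
  simp only [ENNReal.ofReal_mul hK, ENNReal.ofReal_prod_of_nonneg fun _ _ ↦ hw0 _]
  rw [lintegral_const_mul' _ _ ENNReal.ofReal_ne_top, lintegral_prod_eval_pi ν hw.ennreal_ofReal]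

section
variable {E : Type*} [TopologicalSpace E] [MeasurableSpace E] [OpensMeasurableSpace E]

lemma lintegral_ofReal_le_liminf_of_tendsto [HasOuterApproxClosed E] {ν : ProbabilityMeasure E}
    {νs : ℕ → ProbabilityMeasure E} (hν : Tendsto νs atTop (𝓝 ν)) {f : E → ℝ}
    (hf : Continuous f) (hf0 : 0 ≤ f) :
    ∫⁻ x, ENNReal.ofReal (f x) ∂(ν : Measure E) ≤
      liminf (fun n ↦ ∫⁻ x, ENNReal.ofReal (f x) ∂(νs n : Measure E)) atTop :=
  lintegral_le_liminf_lintegral_of_forall_isOpen_measure_le_liminf_measure hf hf0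
    fun _ ↦ ProbabilityMeasure.le_liminf_measure_open_of_tendsto hν

theorem tendsto_integral_of_abs_le_of_tendsto_lintegral [HasOuterApproxClosed E]
    {ν : ProbabilityMeasure E} {νs : ℕ → ProbabilityMeasure E} (hν : Tendsto νs atTop (𝓝 ν))
    {F H : E → ℝ} (hF : Continuous F) (hH : Continuous H) (hFH : ∀ x, |F x| ≤ H x)
    (hfin : ∫⁻ x, ENNReal.ofReal (H x) ∂(ν : Measure E) < ∞)
    (hlim : Tendsto (fun n ↦ ∫⁻ x, ENNReal.ofReal (H x) ∂(νs n : Measure E)) atTop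
      (𝓝 (∫⁻ x, ENNReal.ofReal (H x) ∂(ν : Measure E)))) :
    Tendsto (fun n ↦ ∫ x, F x ∂(νs n : Measure E)) atTop (𝓝 (∫ x, F x ∂(ν : Measure E))) := by
  have hsum := lintegral_ofReal_add_add_lintegral_ofReal_sub hF.measurable hH.measurable hFH
  have hint {ρ : Measure E} :=
    integral_eq_toReal_sub_toReal (ρ := ρ) hF.measurable hH.measurable hFH
  have hadd : Tendsto (fun n ↦ ∫⁻ x, ENNReal.ofReal (H x + F x) ∂(νs n : Measure E)) atTop
      (𝓝 (∫⁻ x, ENNReal.ofReal (H x + F x) ∂(ν : Measure E))) := by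
    refine tendsto_of_tendsto_add_of_le_liminf ?_
      (lintegral_ofReal_le_liminf_of_tendsto hν (by fun_prop : Continuous fun x ↦ H x + F x)
        fun x ↦ neg_le_iff_add_nonneg'.1 (neg_le_of_abs_le (hFH x)))
      (lintegral_ofReal_le_liminf_of_tendsto hν (by fun_prop : Continuous fun x ↦ H x - F x)
        fun x ↦ sub_nonneg.2 (le_of_abs_le (hFH x))) ?_
    · rw [hsum]
      exact ENNReal.mul_ne_top ENNReal.ofNat_ne_top hfin.ne
    · simp only [hsum]
      exact ENNReal.Tendsto.const_mul hlim (.inr ENNReal.ofNat_ne_top)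
  have haddfin : ∫⁻ x, ENNReal.ofReal (H x + F x) ∂(ν : Measure E) ≠ ∞ :=
    ne_top_of_le_ne_top (ENNReal.mul_ne_top ENNReal.ofNat_ne_top hfin.ne)
      (le_self_add.trans_eq (hsum ν))
  rw [hint hfin]
  refine Tendsto.congr' ((hlim.eventually_lt_const hfin).mono fun n hn ↦ (hint hn).symm) ?_
  exact ((ENNReal.tendsto_toReal haddfin).comp hadd).sub
    ((ENNReal.tendsto_toReal hfin.ne).comp hlim)

variable {Ω Ω' : Type*} [MeasurableSpace Ω] [MeasurableSpace Ω'] {μ : Measure Ω}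
  [IsProbabilityMeasure μ] {μ' : Measure Ω'} [IsProbabilityMeasure μ'] {Z : Ω' → E}
  {Zs : ℕ → Ω → E} {f : E → ℝ}

theorem lintegral_le_liminf_of_tendstoInDistribution [HasOuterApproxClosed E]
    (h : TendstoInDistribution Zs atTop Z (fun _ ↦ μ) μ') (hf : Continuous f) (hf0 : 0 ≤ f) :
    ∫⁻ ω, ENNReal.ofReal (f (Z ω)) ∂μ' ≤
      liminf (fun n ↦ ∫⁻ ω, ENNReal.ofReal (f (Zs n ω)) ∂μ) atTop := by
  have hle := lintegral_ofReal_le_liminf_of_tendsto h.tendsto hf hf0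
  simpa only [ProbabilityMeasure.coe_mk,
    lintegral_map' hf.measurable.ennreal_ofReal.aemeasurable h.aemeasurable_limit,
    lintegral_map' hf.measurable.ennreal_ofReal.aemeasurable (h.forall_aemeasurable _)] using hle

theorem tendsto_lintegral_min_of_tendstoInDistribution
    (h : TendstoInDistribution Zs atTop Z (fun _ ↦ μ) μ') (hf : Continuous f) (C : ℝ≥0) :
    Tendsto (fun n ↦ ∫⁻ ω, min (ENNReal.ofReal (f (Zs n ω))) C ∂μ) atTop
      (𝓝 (∫⁻ ω, min (ENNReal.ofReal (f (Z ω))) C ∂μ')) := by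
  let g : E →ᵇ ℝ≥0 := .mkOfBound ⟨fun x ↦ min (f x).toNNReal C, by fun_prop⟩ C fun x y ↦
    abs_sub_le_of_nonneg_of_le (NNReal.coe_nonneg _) (NNReal.coe_le_coe.2 (min_le_right _ _))
      (NNReal.coe_nonneg _) (NNReal.coe_le_coe.2 (min_le_right _ _))
  have hg : Measurable fun x ↦ (g x : ℝ≥0∞) := g.continuous.measurable.coe_nnreal_ennreal
  have hlim := ProbabilityMeasure.tendsto_iff_forall_lintegral_tendsto.1 h.tendsto g
  simpa [lintegral_map' hg.aemeasurable h.aemeasurable_limit,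
    lintegral_map' hg.aemeasurable (h.forall_aemeasurable _), g, ENNReal.coe_min] using! hlim

theorem lintegral_lt_top_of_uniformIntegrable [HasOuterApproxClosed E]
    (h : TendstoInDistribution Zs atTop Z (fun _ ↦ μ) μ') (hf : Continuous f) (hf0 : 0 ≤ f)
    (hui : UniformIntegrable (fun n ω ↦ f (Zs n ω)) 1 μ) :
    ∫⁻ ω, ENNReal.ofReal (f (Z ω)) ∂μ' < ∞ := by
  obtain ⟨-, -, M, hM⟩ := hui
  calc ∫⁻ ω, ENNReal.ofReal (f (Z ω)) ∂μ'
      ≤ liminf (fun n ↦ ∫⁻ ω, ENNReal.ofReal (f (Zs n ω)) ∂μ) atTop :=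
        lintegral_le_liminf_of_tendstoInDistribution h hf hf0
    _ ≤ M := liminf_le_of_frequently_le' (.of_forall fun n ↦
        (lintegral_ofReal_le_lintegral_enorm _).trans
          (eLpNorm_one_eq_lintegral_enorm.symm.trans_le (hM n)))
    _ < ∞ := ENNReal.coe_lt_top

theorem tendsto_lintegral_of_uniformIntegrable [HasOuterApproxClosed E]
    (h : TendstoInDistribution Zs atTop Z (fun _ ↦ μ) μ') (hf : Continuous f) (hf0 : 0 ≤ f)
    (hui : UniformIntegrable (fun n ω ↦ f (Zs n ω)) 1 μ) :
    Tendsto (fun n ↦ ∫⁻ ω, ENNReal.ofReal (f (Zs n ω)) ∂μ) atTop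
      (𝓝 (∫⁻ ω, ENNReal.ofReal (f (Z ω)) ∂μ')) := by
  refine tendsto_of_le_liminf_of_limsup_le (lintegral_le_liminf_of_tendstoInDistribution h hf hf0)
    (ENNReal.le_of_forall_pos_le_add fun ε hε _ ↦ ?_)
  obtain ⟨C, hC⟩ := exists_lintegral_le_lintegral_min_add hui (NNReal.coe_pos.2 hε)
  rw [ENNReal.ofReal_coe_nnreal] at hC
  have hmin := tendsto_lintegral_min_of_tendstoInDistribution h hf C
  calc limsup (fun n ↦ ∫⁻ ω, ENNReal.ofReal (f (Zs n ω)) ∂μ) atTop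
      ≤ limsup (fun n ↦ ∫⁻ ω, min (ENNReal.ofReal (f (Zs n ω))) C ∂μ + ε) atTop :=
        limsup_le_limsup (.of_forall hC)
    _ = ∫⁻ ω, min (ENNReal.ofReal (f (Z ω))) C ∂μ' + ε := (hmin.add_const _).limsup_eq
    _ ≤ ∫⁻ ω, ENNReal.ofReal (f (Z ω)) ∂μ' + ε := by
        gcongr
        exact min_le_left _ _
lemma tendstoInDistribution_of_forall_integral_tendsto (hZs : ∀ n, Measurable (Zs n))
    (hZ : Measurable Z)
    (h : ∀ g : E →ᵇ ℝ, Tendsto (fun n ↦ ∫ ω, g (Zs n ω) ∂μ) atTop (𝓝 (∫ ω, g (Z ω) ∂μ'))) :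
    TendstoInDistribution Zs atTop Z (fun _ ↦ μ) μ' where
  forall_aemeasurable n := (hZs n).aemeasurable
  aemeasurable_limit := hZ.aemeasurable
  tendsto := by
    refine ProbabilityMeasure.tendsto_iff_forall_integral_tendsto.2 fun g ↦ ?_
    have hg {ρ : Measure E} : AEStronglyMeasurable g ρ :=
      g.continuous.measurable.aestronglyMeasurable
    simpa only [ProbabilityMeasure.coe_mk, integral_map (hZs _).aemeasurable hg,
      integral_map hZ.aemeasurable hg] using h g

end

lemma hDCMeasure_eq_integral_altDist {𝒳 𝒴 : Type*} [MetricSpace 𝒳] [MetricSpace 𝒴]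
    [MeasurableSpace 𝒳] [MeasurableSpace 𝒴] (β : ℝ) (ν : Measure (𝒳 × 𝒴)) :
    hDCMeasure β ν = 1 / 4 * ∫ z : Fin 4 → 𝒳 × 𝒴,
      altDist β (fun i ↦ (z i).1) * altDist β (fun i ↦ (z i).2) ∂Measure.pi fun _ ↦ ν :=
  rfl

section
variable {𝒳 𝒴 : Type*} [MetricSpace 𝒳] [SecondCountableTopology 𝒳] [MeasurableSpace 𝒳]
  [BorelSpace 𝒳] [MetricSpace 𝒴] [SecondCountableTopology 𝒴] [MeasurableSpace 𝒴] [BorelSpace 𝒴]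
  {β s : ℝ}

theorem tendsto_hDCMeasure {ν : ProbabilityMeasure (𝒳 × 𝒴)} {νs : ℕ → ProbabilityMeasure (𝒳 × 𝒴)}
    (hν : Tendsto νs atTop (𝓝 ν)) (hβ : 0 ≤ β) (hs : max β (2 * β - 2) ≤ s) (o𝒳 : 𝒳) (o𝒴 : 𝒴)
    (hfin : ∫⁻ z, ENNReal.ofReal (1 + dist z.1 o𝒳 ^ s + dist z.2 o𝒴 ^ s)
      ∂(ν : Measure (𝒳 × 𝒴)) < ∞)
    (hlim : Tendsto (fun n ↦ ∫⁻ z, ENNReal.ofReal (1 + dist z.1 o𝒳 ^ s + dist z.2 o𝒴 ^ s)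
        ∂(νs n : Measure (𝒳 × 𝒴))) atTop
      (𝓝 (∫⁻ z, ENNReal.ofReal (1 + dist z.1 o𝒳 ^ s + dist z.2 o𝒴 ^ s) ∂(ν : Measure (𝒳 × 𝒴))))) :
    Tendsto (fun n ↦ hDCMeasure β (νs n : Measure (𝒳 × 𝒴))) atTop
      (𝓝 (hDCMeasure β (ν : Measure (𝒳 × 𝒴)))) := by
  set w : 𝒳 × 𝒴 → ℝ := fun z ↦ 1 + dist z.1 o𝒳 ^ s + dist z.2 o𝒴 ^ s
  have hs0 : 0 ≤ s := hβ.trans ((le_max_left _ _).trans hs)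
  have hw : Continuous w := (continuous_const.add
    ((continuous_fst.dist continuous_const).rpow_const fun _ ↦ .inr hs0)).add
    ((continuous_snd.dist continuous_const).rpow_const fun _ ↦ .inr hs0)
  set K : ℝ := (2 ^ (β + 1) * max 1 β) ^ 2
  have hbound (z : Fin 4 → 𝒳 × 𝒴) :
      |altDist β (fun i ↦ (z i).1) * altDist β (fun i ↦ (z i).2)| ≤ K * ∏ i, w (z i) :=
    abs_altDist_mul_altDist_le hβ hs o𝒳 o𝒴 z
  have hpow (ρ : ProbabilityMeasure (𝒳 × 𝒴)) :
      ∫⁻ z, ENNReal.ofReal (K * ∏ i, w (z i))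
          ∂(ProbabilityMeasure.pi fun _ : Fin 4 ↦ ρ).toMeasure =
        ENNReal.ofReal K * (∫⁻ z, ENNReal.ofReal (w z) ∂(ρ : Measure (𝒳 × 𝒴))) ^ 4 := by
    rw [ProbabilityMeasure.toMeasure_pi]
    exact lintegral_ofReal_const_mul_prod_eval_pi _ (sq_nonneg _) hw.measurable
      fun z ↦ by positivity
  have hpi : Tendsto (fun n ↦ ProbabilityMeasure.pi fun _ : Fin 4 ↦ νs n) atTop
      (𝓝 (ProbabilityMeasure.pi fun _ ↦ ν)) :=
    (ProbabilityMeasure.continuous_pi.tendsto _).comp (tendsto_pi_nhds.2 fun _ ↦ hν)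
  have hF : Continuous fun z : Fin 4 → 𝒳 × 𝒴 ↦
      altDist β (fun i ↦ (z i).1) * altDist β (fun i ↦ (z i).2) :=
    ((continuous_altDist hβ).comp (by fun_prop)).mul ((continuous_altDist hβ).comp (by fun_prop))
  simp only [hDCMeasure_eq_integral_altDist]
  refine Tendsto.const_mul _
    (tendsto_integral_of_abs_le_of_tendsto_lintegral hpi hF (by fun_prop) hbound ?_ ?_)
  · rw [hpow]
    exact ENNReal.mul_lt_top ENNReal.ofReal_lt_top (ENNReal.pow_lt_top hfin)
  · simp only [hpow]
    exact ENNReal.Tendsto.const_mul (ENNReal.Tendsto.pow hlim) (.inr ENNReal.ofReal_ne_top)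

theorem tendsto_hDCMeasure_map {Ω Ω' : Type*} [MeasurableSpace Ω] [MeasurableSpace Ω']
    {μ : Measure Ω} [IsProbabilityMeasure μ] {μ' : Measure Ω'} [IsProbabilityMeasure μ']
    {Z : Ω' → 𝒳 × 𝒴} {Zs : ℕ → Ω → 𝒳 × 𝒴}
    (h : TendstoInDistribution Zs atTop Z (fun _ ↦ μ) μ') (hβ : 0 ≤ β)
    (hs : max β (2 * β - 2) ≤ s) {o𝒳 : 𝒳} {o𝒴 : 𝒴}
    (hX : ∫⁻ ω, ENNReal.ofReal (dist (Z ω).1 o𝒳 ^ s) ∂μ' < ∞)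
    (hY : ∫⁻ ω, ENNReal.ofReal (dist (Z ω).2 o𝒴 ^ s) ∂μ' < ∞)
    (hXs : Tendsto (fun n ↦ ∫⁻ ω, ENNReal.ofReal (dist (Zs n ω).1 o𝒳 ^ s) ∂μ) atTop
      (𝓝 (∫⁻ ω, ENNReal.ofReal (dist (Z ω).1 o𝒳 ^ s) ∂μ')))
    (hYs : Tendsto (fun n ↦ ∫⁻ ω, ENNReal.ofReal (dist (Zs n ω).2 o𝒴 ^ s) ∂μ) atTop
      (𝓝 (∫⁻ ω, ENNReal.ofReal (dist (Z ω).2 o𝒴 ^ s) ∂μ'))) :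
    Tendsto (fun n ↦ hDCMeasure β (μ.map (Zs n))) atTop (𝓝 (hDCMeasure β (μ'.map Z))) := by
  have hdX : Measurable fun z : 𝒳 × 𝒴 ↦ dist z.1 o𝒳 ^ s := by fun_prop
  have hdY : Measurable fun z : 𝒳 × 𝒴 ↦ dist z.2 o𝒴 ^ s := by fun_prop
  have hdX0 : 0 ≤ fun z : 𝒳 × 𝒴 ↦ dist z.1 o𝒳 ^ s := fun _ ↦ by positivity
  have hdY0 : 0 ≤ fun z : 𝒳 × 𝒴 ↦ dist z.2 o𝒴 ^ s := fun _ ↦ by positivity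
  have hmap := lintegral_map_ofReal_one_add_add h.aemeasurable_limit hdX hdY hdX0 hdY0
  have hmaps (n : ℕ) :=
    lintegral_map_ofReal_one_add_add (h.forall_aemeasurable n) hdX hdY hdX0 hdY0
  refine tendsto_hDCMeasure h.tendsto hβ hs o𝒳 o𝒴 ?_ ?_
  · simp only [ProbabilityMeasure.coe_mk, hmap]
    exact ENNReal.add_lt_top.2 ⟨ENNReal.add_lt_top.2 ⟨ENNReal.one_lt_top, hX⟩, hY⟩
  · simp only [ProbabilityMeasure.coe_mk, hmap, hmaps]
    exact (hXs.const_add 1).add hYs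

end

/-- Let `β > 0`, `β* := max(β, 2β−2)`. Let `(X,Y)` and `(X⁽ⁿ⁾,Y⁽ⁿ⁾)`
be pairs of random variables in `𝒳×𝒴` with `(X⁽ⁿ⁾,Y⁽ⁿ⁾) → (X,Y)` in distribution.
If either (i) `(‖X⁽ⁿ⁾‖^{β*})ₙ` and `(‖Y⁽ⁿ⁾‖^{β*})ₙ` are uniformly integrable, or
(ii) `E‖X⁽ⁿ⁾‖^{β*} → E‖X‖^{β*} < ∞` and `E‖Y⁽ⁿ⁾‖^{β*} → E‖Y‖^{β*} < ∞`, then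
`hDC_β(X⁽ⁿ⁾,Y⁽ⁿ⁾) → hDC_β(X,Y)`. -/
theorem stmt7 {Ω : Type*} [MeasurableSpace Ω] (μ : Measure Ω) [IsProbabilityMeasure μ]
    {𝒳 𝒴 : Type*} [MetricSpace 𝒳] [TopologicalSpace.SeparableSpace 𝒳]
    [MeasurableSpace 𝒳] [BorelSpace 𝒳]
    [MetricSpace 𝒴] [TopologicalSpace.SeparableSpace 𝒴]
    [MeasurableSpace 𝒴] [BorelSpace 𝒴]
    (o𝒳 : 𝒳) (o𝒴 : 𝒴) (β : ℝ) (hβ : 0 < β)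
    (Z : Ω → 𝒳 × 𝒴) (Zseq : ℕ → Ω → 𝒳 × 𝒴)
    (hZm : Measurable Z) (hZseqm : ∀ n, Measurable (Zseq n))
    -- convergence in distribution of `(X⁽ⁿ⁾,Y⁽ⁿ⁾)` to `(X,Y)`:
    (hconv : ∀ g : BoundedContinuousFunction (𝒳 × 𝒴) ℝ,
      Tendsto (fun n => ∫ ω, g (Zseq n ω) ∂μ) atTop (nhds (∫ ω, g (Z ω) ∂μ)))
    (hmoment :
      -- (i) uniform integrability of `‖X⁽ⁿ⁾‖^{β*}` and `‖Y⁽ⁿ⁾‖^{β*}`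
      (UniformIntegrable (fun n ω => dist (Zseq n ω).1 o𝒳 ^ max β (2 * β - 2)) 1 μ ∧
        UniformIntegrable (fun n ω => dist (Zseq n ω).2 o𝒴 ^ max β (2 * β - 2)) 1 μ) ∨
      -- (ii) convergence of `β*`-moments to the (finite) `β*`-moments of `(X,Y)`
      ((∫⁻ ω, ENNReal.ofReal (dist (Z ω).1 o𝒳 ^ max β (2 * β - 2)) ∂μ < ⊤) ∧
        (∫⁻ ω, ENNReal.ofReal (dist (Z ω).2 o𝒴 ^ max β (2 * β - 2)) ∂μ < ⊤) ∧
        Tendsto (fun n => ∫⁻ ω, ENNReal.ofReal (dist (Zseq n ω).1 o𝒳 ^ max β (2 * β - 2)) ∂μ)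
          atTop (nhds (∫⁻ ω, ENNReal.ofReal (dist (Z ω).1 o𝒳 ^ max β (2 * β - 2)) ∂μ)) ∧
        Tendsto (fun n => ∫⁻ ω, ENNReal.ofReal (dist (Zseq n ω).2 o𝒴 ^ max β (2 * β - 2)) ∂μ)
          atTop (nhds (∫⁻ ω, ENNReal.ofReal (dist (Z ω).2 o𝒴 ^ max β (2 * β - 2)) ∂μ)))) :
    Tendsto (fun n => hDCMeasure β (Measure.map (Zseq n) μ)) atTop
      (nhds (hDCMeasure β (Measure.map Z μ))) := by
  have hdistr : TendstoInDistribution Zseq atTop Z (fun _ ↦ μ) μ :=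
    tendstoInDistribution_of_forall_integral_tendsto hZseqm hZm hconv
  have hs : 0 ≤ max β (2 * β - 2) := hβ.le.trans (le_max_left _ _)
  rcases hmoment with ⟨huiX, huiY⟩ | ⟨hX, hY, hXseq, hYseq⟩
  · have hcontX : Continuous fun z : 𝒳 × 𝒴 ↦ dist z.1 o𝒳 ^ max β (2 * β - 2) :=
      (by fun_prop : Continuous fun z : 𝒳 × 𝒴 ↦ dist z.1 o𝒳).rpow_const fun _ ↦ .inr hs
    have hcontY : Continuous fun z : 𝒳 × 𝒴 ↦ dist z.2 o𝒴 ^ max β (2 * β - 2) :=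
      (by fun_prop : Continuous fun z : 𝒳 × 𝒴 ↦ dist z.2 o𝒴).rpow_const fun _ ↦ .inr hs
    have hX0 : 0 ≤ fun z : 𝒳 × 𝒴 ↦ dist z.1 o𝒳 ^ max β (2 * β - 2) := fun _ ↦ by positivity
    have hY0 : 0 ≤ fun z : 𝒳 × 𝒴 ↦ dist z.2 o𝒴 ^ max β (2 * β - 2) := fun _ ↦ by positivity
    exact tendsto_hDCMeasure_map hdistr hβ.le le_rfl
      (lintegral_lt_top_of_uniformIntegrable hdistr hcontX hX0 huiX)
      (lintegral_lt_top_of_uniformIntegrable hdistr hcontY hY0 huiY)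
      (tendsto_lintegral_of_uniformIntegrable hdistr hcontX hX0 huiX)
      (tendsto_lintegral_of_uniformIntegrable hdistr hcontY hY0 huiY)
  · exact tendsto_hDCMeasure_map hdistr hβ.le le_rfl hX hY hXseq hYseq
end
end
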